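/- Let φ: (R,m,k) → (S,n,ℓ) be a surjective local ring homomorphism between commutative Noetherian local rings whose kernel is generated by an R-regular sequence, and let M be a finitely generated S-module. If cidim-fd_R M < ∞, then cidim_S M < ∞. -/

import Mathlib

/-!
Common definitions: André–Quillen homology via the standard (comonad/polynomial)
simplicial resolution, complete-intersection (flat) dimensions via quasi-deformations,
Cohen factorizations, Koszul homology `H₁`, and related notions.
-/

universe u

open TensorProduct IsLocalRing

noncomputable section

/-! ### Flat and projective dimension -/

/-- `FlatDimLE Q n N` : the `Q`-module `N` has flat dimension at most `n`,
i.e. it admits a flat resolution of length at most `n`. -/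
def FlatDimLE (Q : Type u) [CommRing Q] : ℕ → (N : Type u) → [AddCommGroup N] → [Module Q N] → Prop
  | 0, N, _, _ => Module.Flat Q N
  | n+1, N, _, _ =>
      ∃ (F : Type u) (_ : AddCommGroup F) (_ : Module Q F) (f : F →ₗ[Q] N),
        Module.Flat Q F ∧ Function.Surjective f ∧ FlatDimLE Q n (LinearMap.ker f)

/-- `ProjDimLE Q n N` : the `Q`-module `N` has projective dimension at most `n`. -/
def ProjDimLE (Q : Type u) [CommRing Q] : ℕ → (N : Type u) → [AddCommGroup N] → [Module Q N] → Prop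
  | 0, N, _, _ => Module.Projective Q N
  | n+1, N, _, _ =>
      ∃ (F : Type u) (_ : AddCommGroup F) (_ : Module Q F) (f : F →ₗ[Q] N),
        Module.Projective Q F ∧ Function.Surjective f ∧ ProjDimLE Q n (LinearMap.ker f)

/-- The flat dimension `fd_Q N` is finite. -/
def FlatDimFinite (Q : Type u) [CommRing Q] (N : Type u) [AddCommGroup N] [Module Q N] : Prop :=
  ∃ n : ℕ, FlatDimLE Q n N

/-- The projective dimension `pd_Q N` is finite. -/
def ProjDimFinite (Q : Type u) [CommRing Q] (N : Type u) [AddCommGroup N] [Module Q N] : Prop :=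
  ∃ n : ℕ, ProjDimLE Q n N

/-! ### Regular sequences, regular local rings, complete intersection conditions -/

/-- The ideal `I` is generated by an `A`-regular sequence. -/
def GeneratedByRegularSequence (A : Type u) [CommRing A] (I : Ideal A) : Prop :=
  ∃ rs : List A, RingTheory.Sequence.IsRegular A rs ∧ Ideal.span {x | x ∈ rs} = I

/-- A (Noetherian local) ring is regular iff its maximal ideal is generated by a
regular sequence. -/
def IsRegularLocal (A : Type u) [CommRing A] : Prop :=
  IsNoetherianRing A ∧
    ∃ h : IsLocalRing A, GeneratedByRegularSequence A (@IsLocalRing.maximalIdeal A _ h)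

/-- A local homomorphism is weakly regular if it is flat with regular closed fibre. -/
def IsWeaklyRegularHom (A B : Type u) [CommRing A] [CommRing B] [IsLocalRing A]
    (f : A →+* B) : Prop :=
  IsLocalHom f ∧ (letI := f.toAlgebra; Module.Flat A B) ∧
    IsRegularLocal (B ⧸ Ideal.map f (maximalIdeal A))

/-- `R'' → f → g` is a Cohen factorization of the semi-completion of `ψ : A → B`
with respect to the (maximal) ideal `J` of `B`:  `A → R'' → B̂` with `A → R''`
weakly regular, `R''` complete Noetherian local and `R'' → B̂` surjective local. -/
def IsCohenFactorizationAt (A B : Type u) [CommRing A] [CommRing B] [IsLocalRing A]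
    (ψ : A →+* B) (J : Ideal B) (R'' : Type u) [CommRing R'']
    (f : A →+* R'') (g : R'' →+* AdicCompletion J B) : Prop :=
  g.comp f = (algebraMap B (AdicCompletion J B)).comp ψ ∧
  IsNoetherianRing R'' ∧
  (∃ h : IsLocalRing R'', IsAdicComplete (@IsLocalRing.maximalIdeal R'' _ h) R'') ∧
  IsWeaklyRegularHom A R'' f ∧
  Function.Surjective g ∧ IsLocalHom g

/-- `ψ : A → B` is complete intersection (c.i.) at the ideal `J` (typically the
maximal ideal of `B`): in a Cohen factorization `A → R'' → B̂` of the
semi-completion of `ψ`, the kernel of `R'' → B̂` is generated by a regular sequence. -/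
def IsCIAt (A B : Type u) [CommRing A] [CommRing B] [IsLocalRing A]
    (ψ : A →+* B) (J : Ideal B) : Prop :=
  ∃ (R'' : Type u) (_ : CommRing R'') (f : A →+* R'') (g : R'' →+* AdicCompletion J B),
    IsCohenFactorizationAt A B ψ J R'' f g ∧ GeneratedByRegularSequence R'' (RingHom.ker g)

/-- A Noetherian local ring is a complete intersection if its completion is the
quotient of a complete regular local ring by an ideal generated by a regular sequence. -/
def IsCompleteIntersectionRing (A : Type u) [CommRing A] : Prop :=
  IsNoetherianRing A ∧
  ∃ h : IsLocalRing A,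
    ∃ (Q : Type u) (_ : CommRing Q)
      (g : Q →+* AdicCompletion (@IsLocalRing.maximalIdeal A _ h) A),
      IsRegularLocal Q ∧ (∃ hq : IsLocalRing Q, IsAdicComplete (@IsLocalRing.maximalIdeal Q _ hq) Q) ∧
      Function.Surjective g ∧ GeneratedByRegularSequence Q (RingHom.ker g)

/-! ### Complete intersection (flat) dimensions via quasi-deformations

`R → R' ← Q` is a quasi-deformation when `R → R'` is flat local and `Q → R'` is
surjective local with kernel generated by a `Q`-regular sequence (all rings
Noetherian local).  The various complete intersection (flat) dimensions
`CI-fd`, `CI-dim`, `CI*-fd`, `CI*-dim`, `cidim-fd`, `cidim` of a module `M` are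
`inf { fd_Q(R' ⊗_R M) - pd_Q R' }` over (upper / complete intersection)
quasi-deformations; such a dimension is finite iff there is a quasi-deformation
of the appropriate kind for which both `fd_Q (R' ⊗_R M)` and `pd_Q R'` are finite. -/

/-- The conditions on `R → R' ← Q` making it a quasi-deformation. -/
def IsQuasiDeformation (R R' Q : Type u) [CommRing R] [CommRing R'] [CommRing Q]
    (f : R →+* R') (g : Q →+* R') : Prop :=
  IsLocalRing R' ∧ IsLocalRing Q ∧ IsNoetherianRing R' ∧ IsNoetherianRing Q ∧
  IsLocalHom f ∧ IsLocalHom g ∧ (letI := f.toAlgebra; Module.Flat R R') ∧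
  Function.Surjective g ∧ GeneratedByRegularSequence Q (RingHom.ker g)

/-- `CI-fd_R M < ∞` (equivalently, for finitely generated `M`, `CI-dim_R M < ∞`):
there is a quasi-deformation `R → R' ← Q` with `fd_Q (R' ⊗_R M)` and `pd_Q R'` finite. -/
def HasFiniteCIDim (R : Type u) [CommRing R] (M : Type u) [AddCommGroup M] [Module R M] : Prop :=
  ∃ (R' Q : Type u) (_ : CommRing R') (_ : CommRing Q) (f : R →+* R') (g : Q →+* R'),
    IsQuasiDeformation R R' Q f g ∧
    (letI := f.toAlgebra;
     letI := g.toAlgebra;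
     letI : Module Q (R' ⊗[R] M) := Module.compHom _ g;
     FlatDimFinite Q (R' ⊗[R] M) ∧ ProjDimFinite Q R')

/-- `CI*-fd_R M < ∞` (resp. `CI*-dim_R M < ∞`): as in `HasFiniteCIDim` but over
upper quasi-deformations, i.e. `R → R'` is weakly regular. -/
def HasFiniteUpperCIDim (R : Type u) [CommRing R] [IsLocalRing R]
    (M : Type u) [AddCommGroup M] [Module R M] : Prop :=
  ∃ (R' Q : Type u) (_ : CommRing R') (_ : CommRing Q) (f : R →+* R') (g : Q →+* R'),
    IsQuasiDeformation R R' Q f g ∧ IsWeaklyRegularHom R R' f ∧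
    (letI := f.toAlgebra;
     letI := g.toAlgebra;
     letI : Module Q (R' ⊗[R] M) := Module.compHom _ g;
     FlatDimFinite Q (R' ⊗[R] M) ∧ ProjDimFinite Q R')

/-- `cidim-fd_R M < ∞` (resp. `cidim_R M < ∞`): as in `HasFiniteCIDim` but over
complete intersection quasi-deformations, i.e. `R → R'` is c.i. at the maximal
ideal of `R'`. -/
def HasFiniteCIQDDim (R : Type u) [CommRing R] [IsLocalRing R]
    (M : Type u) [AddCommGroup M] [Module R M] : Prop :=
  ∃ (R' Q : Type u) (_ : CommRing R') (_ : CommRing Q) (hR' : IsLocalRing R')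
    (f : R →+* R') (g : Q →+* R'),
    IsQuasiDeformation R R' Q f g ∧
    IsCIAt R R' f (@IsLocalRing.maximalIdeal R' _ hR') ∧
    (letI := f.toAlgebra;
     letI := g.toAlgebra;
     letI : Module Q (R' ⊗[R] M) := Module.compHom _ g;
     FlatDimFinite Q (R' ⊗[R] M) ∧ ProjDimFinite Q R')

/-! ### André–Quillen homology

`D_n(S|R, M)` is defined as the `n`-th homology of `L ⊗_S M`, where `L` is the
cotangent complex of the `R`-algebra `S`: the complex associated to the standard
simplicial resolution `X` of `S` by polynomial `R`-algebras (the comonad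
resolution `X_n = G^{n+1} S`, `G A = R[A]`), with `L_n = S ⊗_{X_n} Ω_{X_n/R}`
the free `S`-module on the variables of `X_n` and differentials the alternating
sums of the maps induced by the face maps. -/

/-- `AQV R S n` is, for `n ≥ 1`, the `n`-th ring in the standard simplicial
polynomial resolution of `S` over `R` (and `AQV R S 0 = S` as an index set). -/
def AQV (R S : Type u) [CommRing R] : ℕ → Type u
  | 0 => S
  | n+1 => MvPolynomial (AQV R S n) R

noncomputable instance (R S : Type u) [CommRing R] (n : ℕ) : CommRing (AQV R S (n+1)) :=
  inferInstanceAs (CommRing (MvPolynomial (AQV R S n) R))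

noncomputable instance (R S : Type u) [CommRing R] (n : ℕ) : Algebra R (AQV R S (n+1)) :=
  inferInstanceAs (Algebra R (MvPolynomial (AQV R S n) R))

/-- The augmentations `X_n → S` of the standard resolution. -/
def AQaug (R S : Type u) [CommRing R] [CommRing S] [Algebra R S] :
    (n : ℕ) → (AQV R S (n+1) →ₐ[R] S)
  | 0 => MvPolynomial.aeval (id : S → S)
  | n+1 => MvPolynomial.aeval (fun v : AQV R S (n+1) => AQaug R S n v)

/-- The face maps `dᵢ : X_{n+1} → X_n` of the standard resolution: `d₀` is the
counit and `d_{i+1} = G(dᵢ)`. -/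
def AQface (R S : Type u) [CommRing R] [CommRing S] [Algebra R S] :
    (n : ℕ) → (i : ℕ) → (AQV R S (n+2) →ₐ[R] AQV R S (n+1))
  | n, 0 => MvPolynomial.aeval (id : AQV R S (n+1) → AQV R S (n+1))
  | 0, _+1 => MvPolynomial.rename ⇑(AQaug R S 0)
  | n+1, i+1 => MvPolynomial.rename ⇑(AQface R S n i)

variable (R S : Type u) [CommRing R] [CommRing S] [Algebra R S]
variable (M : Type u) [AddCommGroup M] [Module S M]

/-- The map `L_{n+1} ⊗ M → L_n ⊗ M` induced by an `R`-algebra map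
`f : X_{n+1} → X_n` on the (base-changed) Kähler differentials: the free module
on the variables `v` of `X_{n+1}` maps by `e_v ↦ ∑_w aug(∂(f Xᵥ)/∂w) • e_w`. -/
def AQind (n : ℕ) (f : AQV R S (n+2) →ₐ[R] AQV R S (n+1)) :
    (AQV R S (n+1) →₀ M) →ₗ[S] (AQV R S n →₀ M) :=
  Finsupp.lsum S fun v : AQV R S (n+1) =>
    letI : DecidableEq (AQV R S n) := Classical.decEq _
    let P : MvPolynomial (AQV R S n) R := f (MvPolynomial.X v)
    ∑ w ∈ P.vars,
      (Finsupp.lsingle w).comp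
        ((AQaug R S n ((MvPolynomial.pderiv w) P) : S) • (LinearMap.id : M →ₗ[S] M))

/-- The differential `L_{n+1} ⊗ M → L_n ⊗ M` of the cotangent complex:
the alternating sum of the maps induced by the face maps. -/
def AQdiff (n : ℕ) : (AQV R S (n+1) →₀ M) →ₗ[S] (AQV R S n →₀ M) :=
  ∑ i ∈ Finset.range (n+2), ((-1 : ℤ)^i) • AQind R S M n (AQface R S n i)

/-- Cycles of the cotangent complex with coefficients in `M`. -/
def AQcycles : (n : ℕ) → Submodule S (AQV R S n →₀ M)
  | 0 => ⊤
  | n+1 => LinearMap.ker (AQdiff R S M n)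

/-- André–Quillen homology `D_n(S|R, M)`. -/
def AQH (n : ℕ) : Type u :=
  AQcycles R S M n ⧸
    (LinearMap.range (AQdiff R S M n)).comap (AQcycles R S M n).subtype

noncomputable instance (n : ℕ) : AddCommGroup (AQH R S M n) :=
  inferInstanceAs (AddCommGroup (AQcycles R S M n ⧸
    (LinearMap.range (AQdiff R S M n)).comap (AQcycles R S M n).subtype))

/-- `AQdimLE R S d`: the André–Quillen dimension of the `R`-algebra `S` is at
most `d`, i.e. `D_n(S|R, -) = 0` for all `n > d`. -/
def AQdimLE (d : ℕ) : Prop :=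
  ∀ n : ℕ, d < n → ∀ (N : Type u) (iN : AddCommGroup N) (mN : Module S N),
    Subsingleton (@AQH R S _ _ _ N iN mN n)

/-- `AQ-dim_R S < ∞`. -/
def AQdimFinite : Prop := ∃ d : ℕ, AQdimLE R S d

/-! ### Koszul homology `H₁` -/

/-- First differential of the Koszul complex on `x : Fin c → A`. -/
def koszulD1 (A : Type u) [CommRing A] {c : ℕ} (x : Fin c → A) : (Fin c → A) →ₗ[A] A :=
  ∑ i, x i • (LinearMap.proj i : ((Fin c → A)) →ₗ[A] A)

/-- One-cycles of the Koszul complex on `x`. -/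
def koszulZ1 (A : Type u) [CommRing A] {c : ℕ} (x : Fin c → A) : Submodule A (Fin c → A) :=
  LinearMap.ker (koszulD1 A x)

/-- One-boundaries of the Koszul complex on `x` (the image of the second Koszul
differential, spanned by the elements `xᵢ eⱼ - xⱼ eᵢ`). -/
def koszulB1 (A : Type u) [CommRing A] {c : ℕ} (x : Fin c → A) : Submodule A (Fin c → A) :=
  Submodule.span A
    {v : Fin c → A | ∃ i j, v =
      x i • (Pi.single j (1 : A) : Fin c → A) - x j • (Pi.single i (1 : A) : Fin c → A)}

/-- First Koszul homology of the sequence `x : Fin c → A`. -/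
def KoszulH1 (A : Type u) [CommRing A] {c : ℕ} (x : Fin c → A) : Type u :=
  koszulZ1 A x ⧸ (koszulB1 A x).comap (koszulZ1 A x).subtype

noncomputable instance (A : Type u) [CommRing A] {c : ℕ} (x : Fin c → A) :
    AddCommGroup (KoszulH1 A x) :=
  inferInstanceAs (AddCommGroup (koszulZ1 A x ⧸ (koszulB1 A x).comap (koszulZ1 A x).subtype))

noncomputable instance (A : Type u) [CommRing A] {c : ℕ} (x : Fin c → A) :
    Module A (KoszulH1 A x) :=
  inferInstanceAs (Module A (koszulZ1 A x ⧸ (koszulB1 A x).comap (koszulZ1 A x).subtype))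

/-- `H₁(K(σ))` is a free `T̂`-module:  for any Cohen factorization
`S → S'' → T̂` of the semi-completion of `σ` and any finite generating set `x` of
`ker (S'' → T̂)`, the first Koszul homology of `x`, base-changed to `T̂`
(it is killed by `ker (S'' → T̂)`), is a free `T̂`-module. -/
def KoszulH1FreeHom (S T : Type u) [CommRing S] [CommRing T] [IsLocalRing S] [IsLocalRing T]
    (σ : S →+* T) : Prop :=
  ∀ (S'' : Type u) (_ : CommRing S'') (f : S →+* S'')
    (g : S'' →+* AdicCompletion (maximalIdeal T) T),
    IsCohenFactorizationAt S T σ (maximalIdeal T) S'' f g →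
    ∀ (c : ℕ) (x : Fin c → S''), Ideal.span (Set.range x) = RingHom.ker g →
      (letI := g.toAlgebra;
       Module.Free (AdicCompletion (maximalIdeal T) T)
         ((AdicCompletion (maximalIdeal T) T) ⊗[S''] (KoszulH1 S'' x)))

/-! ### Separability (MacLane) -/

/-- A field extension `ℓ/k` is separable (in the sense of MacLane, allowing
non-algebraic extensions) iff `K ⊗_k ℓ` is reduced for every field extension `K/k`. -/
def IsSeparableFieldExtension (k ℓ : Type u) [Field k] [Field ℓ] [Algebra k ℓ] : Prop :=
  ∀ (K : Type u) (_ : Field K) (_ : Algebra k K), IsReduced (K ⊗[k] ℓ)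

end


variable (R S M : Type u) [CommRing R] [CommRing S]
  [IsLocalRing R] [IsLocalRing S] [IsNoetherianRing R] [IsNoetherianRing S]
  [Algebra R S] [IsLocalHom (algebraMap R S)]
  [AddCommGroup M] [Module R M] [Module S M] [IsScalarTower R S M] [Module.Finite S M]

/-!
Let `R → R' ← Q` be a complete intersection quasi-deformation of `R`, let `φ : R → S` be surjective
with kernel `J` generated by a regular sequence `x`, and base change along `φ` to get
`S → R'/JR' ← Q`. By flatness `x` stays regular on `R'`, so lifting it to `Q` and appending it to
the regular generators of `ker (Q → R')` gives regular generators of `ker (Q → R'/JR')`; the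
`Q`-module `R'/JR' ⊗_S M` is `R' ⊗_R M`, with the same flat dimension.

A Cohen factorization `R → T → R'^` of `R → R'` base changes to `S → T/JT → (R'/JR')^`. If `y` are
regular generators of `ker (T → R'^)`, then `y, x` is regular in `T`; as `T` is Noetherian local,
so is `x, y`, and hence `y` is regular in `T/JT`.
-/

section RegularSequence

open RingTheory.Sequence

theorem isRegular_self_iff {A : Type*} [CommRing A] {rs : List A} :
    IsRegular A rs ↔ IsWeaklyRegular A rs ∧ Ideal.ofList rs ≠ ⊤ := by
  rw [isRegular_iff, smul_eq_mul, Ideal.mul_top, ne_comm]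

theorem generatedByRegularSequence_iff {A : Type u} [CommRing A] {I : Ideal A} :
    GeneratedByRegularSequence A I ↔
      I ≠ ⊤ ∧ ∃ rs : List A, IsWeaklyRegular A rs ∧ Ideal.ofList rs = I := by
  constructor
  · rintro ⟨rs, hrs, rfl⟩
    exact ⟨(isRegular_self_iff.mp hrs).2, rs, hrs.toIsWeaklyRegular, rfl⟩
  · rintro ⟨hI, rs, hrs, rfl⟩
    exact ⟨rs, isRegular_self_iff.mpr ⟨hrs, hI⟩, rfl⟩

theorem isWeaklyRegular_append_iff_of_ofList_eq_ker {A B : Type*} [CommRing A] [CommRing B]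
    {g : A →+* B} (hg : Function.Surjective g) {rs : List A}
    (hrs : Ideal.ofList rs = RingHom.ker g) (ss : List A) :
    IsWeaklyRegular A (rs ++ ss) ↔ IsWeaklyRegular A rs ∧ IsWeaklyRegular B (ss.map g) := by
  algebraize [g]
  have hker : Ideal.ofList rs • (⊤ : Submodule A A) = LinearMap.ker (Algebra.linearMap A B) := by
    rw [smul_eq_mul, Ideal.mul_top, hrs]
    rfl
  let e : (A ⧸ Ideal.ofList rs • (⊤ : Submodule A A)) ≃ₗ[A] B :=
    (Submodule.quotEquivOfEq _ _ hker).trans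
      ((Algebra.linearMap A B).quotKerEquivOfSurjective hg)
  rw [isWeaklyRegular_append_iff, e.isWeaklyRegular_congr,
    ← isWeaklyRegular_map_algebraMap_iff B B ss]
  rfl

theorem isWeaklyRegular_map_of_flat {A B : Type*} [CommRing A] [CommRing B] {f : A →+* B}
    (hf : f.Flat) {rs : List A} (hrs : IsWeaklyRegular A rs) : IsWeaklyRegular B (rs.map f) := by
  algebraize [f]
  exact hrs.of_flat

namespace GeneratedByRegularSequence

theorem map_of_flat {A B : Type u} [CommRing A] [CommRing B] {f : A →+* B} (hf : f.Flat)
    {I : Ideal A} (hI : GeneratedByRegularSequence A I) (hIB : I.map f ≠ ⊤) :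
    GeneratedByRegularSequence B (I.map f) := by
  obtain ⟨-, rs, hrs, rfl⟩ := generatedByRegularSequence_iff.mp hI
  exact generatedByRegularSequence_iff.mpr
    ⟨hIB, rs.map f, isWeaklyRegular_map_of_flat hf hrs, (Ideal.map_ofList f rs).symm⟩

theorem map_ringEquiv {A B : Type u} [CommRing A] [CommRing B] {I : Ideal A}
    (hI : GeneratedByRegularSequence A I) (e : A ≃+* B) :
    GeneratedByRegularSequence B (I.map (e : A →+* B)) :=
  hI.map_of_flat (.of_bijective e.bijective) fun h => (generatedByRegularSequence_iff.mp hI).1 <| by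
    rw [← Ideal.comap_map_of_bijective (e : A →+* B) e.bijective (I := I), h, Ideal.comap_top]

theorem comap_of_surjective {A B : Type u} [CommRing A] [CommRing B] {g : A →+* B}
    (hg : Function.Surjective g) (hker : GeneratedByRegularSequence A (RingHom.ker g))
    {J : Ideal B} (hJ : GeneratedByRegularSequence B J) :
    GeneratedByRegularSequence A (J.comap g) := by
  obtain ⟨-, rs, hrs, hrs_ker⟩ := generatedByRegularSequence_iff.mp hker
  obtain ⟨hJ_top, ts, hts, rfl⟩ := generatedByRegularSequence_iff.mp hJ
  obtain ⟨ss, rfl⟩ := List.map_surjective_iff.mpr hg ts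
  refine generatedByRegularSequence_iff.mpr ⟨Ideal.comap_ne_top g hJ_top, rs ++ ss,
    (isWeaklyRegular_append_iff_of_ofList_eq_ker hg hrs_ker ss).mpr ⟨hrs, hts⟩, ?_⟩
  rw [Ideal.ofList_append, ← Ideal.map_ofList, Ideal.comap_map_of_surjective' g hg, hrs_ker,
    sup_comm]

theorem map_mk_ker {A B : Type u} [CommRing A] [CommRing B] [IsLocalRing A]
    [IsNoetherianRing A] {g : A →+* B} (hg : Function.Surjective g)
    (hker : GeneratedByRegularSequence A (RingHom.ker g)) {I : Ideal A} {xs : List A}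
    (hI : Ideal.ofList xs = I) (hxs : IsWeaklyRegular B (xs.map g)) (hsup : I ⊔ RingHom.ker g ≠ ⊤) :
    GeneratedByRegularSequence (A ⧸ I) ((RingHom.ker g).map (Ideal.Quotient.mk I)) := by
  obtain ⟨-, ys, hys, hys_ker⟩ := generatedByRegularSequence_iff.mp hker
  -- `ys ++ xs` is regular, and regular sequences in a Noetherian local ring may be permuted.
  have hperm : IsWeaklyRegular A (xs ++ ys) := by
    refine IsLocalRing.isWeaklyRegular_of_perm_of_subset_maximalIdeal
      ((isWeaklyRegular_append_iff_of_ofList_eq_ker hg hys_ker xs).mpr ⟨hys, hxs⟩)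
      List.perm_append_comm fun r hr => IsLocalRing.le_maximalIdeal hsup ?_
    rw [← hI, ← hys_ker, ← Ideal.ofList_append]
    exact Ideal.subset_span (List.perm_append_comm.mem_iff.mp hr)
  refine generatedByRegularSequence_iff.mpr ⟨fun htop => hsup ?_, ys.map (Ideal.Quotient.mk _),
    ((isWeaklyRegular_append_iff_of_ofList_eq_ker Ideal.Quotient.mk_surjective
      (hI.trans Ideal.mk_ker.symm) ys).mp hperm).2, by rw [← Ideal.map_ofList, hys_ker]⟩
  have := congrArg (Ideal.comap (Ideal.Quotient.mk I)) htop
  rwa [Ideal.comap_map_of_surjective' _ Ideal.Quotient.mk_surjective, Ideal.mk_ker,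
    Ideal.comap_top, sup_comm] at this

end GeneratedByRegularSequence

end RegularSequence

section Dimension

open CategoryTheory

variable {Q : Type u} [CommRing Q]

theorem ProjDimLE.of_hasProjectiveDimensionLT (n : ℕ) (N : Type u) [AddCommGroup N] [Module Q N]
    (h : HasProjectiveDimensionLT (ModuleCat.of Q N) (n + 1)) : ProjDimLE Q n N := by
  induction n generalizing N with
  | zero =>
    exact (IsProjective.iff_projective N).mpr (projective_iff_hasProjectiveDimensionLT_one.mpr h)
  | succ n ih =>
    have hsurj := Finsupp.linearCombination_id_surjective Q N
    have hproj : Projective (ModuleCat.of Q (N →₀ Q)) :=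
      (IsProjective.iff_projective (N →₀ Q)).mp inferInstance
    exact ⟨N →₀ Q, inferInstance, inferInstance, Finsupp.linearCombination Q id, inferInstance,
      hsurj, ih _ <| ((LinearMap.shortExact_shortComplexKer
        hsurj).hasProjectiveDimensionLT_X₃_iff n hproj).mp h⟩

theorem ProjDimFinite.of_ker_generatedByRegularSequence {T : Type u} [CommRing T] [IsLocalRing Q]
    [IsNoetherianRing Q] {g : Q →+* T} (hg : Function.Surjective g)
    (hker : GeneratedByRegularSequence Q (RingHom.ker g)) :
    letI := g.toAlgebra; ProjDimFinite Q T := by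
  algebraize [g]
  obtain ⟨rs, hrs, hrs_ker⟩ := hker
  have hpd := ModuleCat.projectiveDimension_quotient_eq_length.{u} rs hrs
  let e : Shrink.{u} (Q ⧸ Ideal.ofList rs) ≃ₗ[Q] T :=
    (Shrink.linearEquiv Q _).trans <| (Submodule.quotEquivOfEq _ _ hrs_ker).trans <|
      (Algebra.linearMap Q T).quotKerEquivOfSurjective hg
  rw [projectiveDimension_eq_of_iso e.toModuleIso] at hpd
  exact ⟨rs.length, .of_hasProjectiveDimensionLT _ T ((projectiveDimension_le_iff _ _).mp hpd.le)⟩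

theorem FlatDimLE.of_linearEquiv {n : ℕ} {N N' : Type u} [AddCommGroup N] [Module Q N]
    [AddCommGroup N'] [Module Q N'] (e : N ≃ₗ[Q] N') (h : FlatDimLE Q n N) :
    FlatDimLE Q n N' := by
  cases n with
  | zero =>
    have : Module.Flat Q N := h
    exact Module.Flat.of_linearEquiv e.symm
  | succ n =>
    obtain ⟨F, _, _, f, hF, hf, hk⟩ := h
    refine ⟨F, inferInstance, inferInstance, e.toLinearMap ∘ₗ f, hF, e.surjective.comp hf, ?_⟩
    rwa [LinearEquiv.ker_comp]

end Dimension

section BaseChange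

variable {A B C : Type*} [CommRing A] [CommRing B] [CommRing C]

/-- The base change `C → B ⧸ (ker φ)B` of a ring homomorphism `f : A → B` along a surjective ring
homomorphism `φ : A → C`, under the identification of `C ⊗ B` with `B ⧸ (ker φ)B`. -/
noncomputable def baseChangeOfSurjective {φ : A →+* C} (hφ : Function.Surjective φ) (f : A →+* B) :
    C →+* B ⧸ (RingHom.ker φ).map f :=
  RingHom.liftOfSurjective φ hφ
    ⟨(Ideal.Quotient.mk _).comp f, by
      rw [← RingHom.comap_ker, Ideal.mk_ker]
      exact Ideal.le_comap_map⟩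

theorem baseChangeOfSurjective_comp {φ : A →+* C} (hφ : Function.Surjective φ) (f : A →+* B) :
    (baseChangeOfSurjective hφ f).comp φ = (Ideal.Quotient.mk _).comp f :=
  RingHom.liftOfRightInverse_comp _ _ _ _

theorem isPushout_quotient_map_ker [Algebra A B] [Algebra A C]
    [Algebra C (B ⧸ (RingHom.ker (algebraMap A C)).map (algebraMap A B))]
    [IsScalarTower A C (B ⧸ (RingHom.ker (algebraMap A C)).map (algebraMap A B))]
    (hsurj : Function.Surjective (algebraMap A C)) :
    Algebra.IsPushout A B C (B ⧸ (RingHom.ker (algebraMap A C)).map (algebraMap A B)) := by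
  let I := RingHom.ker (algebraMap A C)
  let e : B ⊗[A] C ≃ₗ[B] B ⧸ I.map (algebraMap A B) :=
    (AlgebraTensorModule.congr (.refl B B) (Ideal.quotientKerAlgEquivOfSurjective
      (f := Algebra.ofId A C) hsurj).symm.toLinearEquiv).trans
      (Algebra.TensorProduct.quotIdealMapEquivTensorQuot B I).symm.toLinearEquiv
  refine ⟨.of_equiv e fun c => ?_⟩
  obtain ⟨a, rfl⟩ := hsurj c
  have hsymm : (Ideal.quotientKerAlgEquivOfSurjective (f := Algebra.ofId A C) hsurj).symm
      (algebraMap A C a) = Ideal.Quotient.mk I a :=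
    (AlgEquiv.symm_apply_eq _).mpr rfl
  calc
    _ = (Algebra.TensorProduct.quotIdealMapEquivTensorQuot B I).symm
          (1 ⊗ₜ Ideal.Quotient.mk I a) :=
      congrArg (fun c' => (Algebra.TensorProduct.quotIdealMapEquivTensorQuot B I).symm (1 ⊗ₜ c'))
        hsymm
    _ = Ideal.Quotient.mk _ (a • (1 : B)) :=
      Algebra.TensorProduct.quotIdealMapEquivTensorQuot_symm_tmul B I 1 a
    _ = algebraMap A _ a := by rw [← Algebra.algebraMap_eq_smul_one]; rfl
    _ = algebraMap C _ (algebraMap A C a) := IsScalarTower.algebraMap_apply A C _ a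

theorem baseChangeOfSurjective_flat {φ : A →+* C} (hφ : Function.Surjective φ) {f : A →+* B}
    (hf : f.Flat) : (baseChangeOfSurjective hφ f).Flat := by
  algebraize [φ, f, baseChangeOfSurjective hφ f]
  have : IsScalarTower A C (B ⧸ (RingHom.ker φ).map f) :=
    .of_algebraMap_eq' (baseChangeOfSurjective_comp hφ f).symm
  exact Module.Flat.isBaseChange A C B _ (isPushout_quotient_map_ker hφ).symm.out

theorem isLocalHom_baseChangeOfSurjective [IsLocalRing B] {φ : A →+* C}
    (hφ : Function.Surjective φ) (f : A →+* B) [IsLocalHom f]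
    [Nontrivial (B ⧸ (RingHom.ker φ).map f)] : IsLocalHom (baseChangeOfSurjective hφ f) := by
  have := IsLocalHom.of_surjective (Ideal.Quotient.mk ((RingHom.ker φ).map f))
    Ideal.Quotient.mk_surjective
  have hcomp : IsLocalHom ((baseChangeOfSurjective hφ f).comp φ) := by
    rw [baseChangeOfSurjective_comp]
    infer_instance
  refine ⟨fun c hc => ?_⟩
  obtain ⟨a, rfl⟩ := hφ c
  exact (hcomp.map_nonunit a hc).map φ

theorem map_ne_top_of_isLocalHom [IsLocalRing A] [IsLocalRing B] (f : A →+* B) [IsLocalHom f]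
    {I : Ideal A} (hI : I ≠ ⊤) : I.map f ≠ ⊤ :=
  ne_top_of_le_ne_top Ideal.IsPrime.ne_top' <|
    (Ideal.map_mono (le_maximalIdeal hI)).trans (map_maximalIdeal_le f)

theorem FlatDimLE.tensor_quotient_map_ker {Q A B C N : Type u} [CommRing Q] [CommRing A]
    [CommRing B] [CommRing C] [Algebra A C] [AddCommGroup N] [Module A N] [Module C N]
    [IsScalarTower A C N] (hsurj : Function.Surjective (algebraMap A C)) (f : A →+* B)
    (g : Q →+* B) {n : ℕ}
    (h : letI := f.toAlgebra
      letI : Module Q (B ⊗[A] N) := Module.compHom _ g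
      FlatDimLE Q n (B ⊗[A] N)) :
    letI := (baseChangeOfSurjective hsurj f).toAlgebra
    letI : Module Q ((B ⧸ (RingHom.ker (algebraMap A C)).map f) ⊗[C] N) :=
      Module.compHom _ ((Ideal.Quotient.mk ((RingHom.ker (algebraMap A C)).map f)).comp g)
    FlatDimLE Q n ((B ⧸ (RingHom.ker (algebraMap A C)).map f) ⊗[C] N) := by
  algebraize [f, baseChangeOfSurjective hsurj f]
  let _ : Module Q ((B ⧸ (RingHom.ker (algebraMap A C)).map f) ⊗[C] N) :=
    Module.compHom _ ((Ideal.Quotient.mk ((RingHom.ker (algebraMap A C)).map f)).comp g)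
  have : IsScalarTower A C (B ⧸ (RingHom.ker (algebraMap A C)).map f) :=
    .of_algebraMap_eq' (baseChangeOfSurjective_comp hsurj f).symm
  have := isPushout_quotient_map_ker (B := B) hsurj
  let e := (Algebra.IsPushout.cancelBaseChange A B C
    (B ⧸ (RingHom.ker (algebraMap A C)).map f) N).symm
  let _ : Module Q (B ⊗[A] N) := Module.compHom _ g
  refine FlatDimLE.of_linearEquiv { e with map_smul' := fun q x => ?_ } h
  calc
    e (g q • x) = g q • e x := e.map_smul (g q) x
    _ = (Ideal.Quotient.mk ((RingHom.ker (algebraMap A C)).map f)) (g q) • e x :=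
      (algebraMap_smul _ (g q) (e x)).symm

end BaseChange

section Completion

variable {A B : Type*} [CommRing A] [CommRing B]

theorem pow_le_comap_pow {f : A →+* B} {I : Ideal A} {J : Ideal B} (h : I.map f ≤ J) (n : ℕ) :
    I ^ n ≤ (J ^ n).comap f := by
  rw [← Ideal.map_le_iff_le_comap, Ideal.map_pow]
  exact Ideal.pow_right_mono h n

theorem factorPow_comp_quotientMap_comp_evalₐ {f : A →+* B} {I : Ideal A} {J : Ideal B}
    (h : I.map f ≤ J) {m n : ℕ} (hmn : m ≤ n) :
    (Ideal.Quotient.factorPow J hmn).comp ((Ideal.quotientMap (J ^ n) f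
      (pow_le_comap_pow h n)).comp (AdicCompletion.evalₐ I n : AdicCompletion I A →+* A ⧸ I ^ n)) =
    (Ideal.quotientMap (J ^ m) f (pow_le_comap_pow h m)).comp
      (AdicCompletion.evalₐ I m : AdicCompletion I A →+* A ⧸ I ^ m) := by
  ext x
  obtain ⟨x, rfl⟩ := AdicCompletion.mk_surjective I A x
  simp only [RingHom.comp_apply, RingHom.coe_coe, AdicCompletion.evalₐ_mk, Ideal.quotientMap_mk]
  refine Ideal.Quotient.eq.mpr ?_
  rw [← map_sub]
  exact pow_le_comap_pow h m (Ideal.Quotient.eq.mp (AdicCompletion.Ideal.mk_eq_mk _ hmn x))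

/-- The ring homomorphism between the `I`-adic and `J`-adic completions induced by a ring
homomorphism `f : A → B` with `f(I) ⊆ J`. -/
noncomputable def adicCompletionMap (f : A →+* B) {I : Ideal A} {J : Ideal B} (h : I.map f ≤ J) :
    AdicCompletion I A →+* AdicCompletion J B :=
  AdicCompletion.liftRingHom J _ (factorPow_comp_quotientMap_comp_evalₐ h)

theorem evalₐ_adicCompletionMap {f : A →+* B} {I : Ideal A} {J : Ideal B} (h : I.map f ≤ J) {n : ℕ}
    {x : AdicCompletion I A} {a : A} (hx : AdicCompletion.evalₐ I n x = Ideal.Quotient.mk _ a) :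
    AdicCompletion.evalₐ J n (adicCompletionMap f h x) = Ideal.Quotient.mk _ (f a) :=
  (AdicCompletion.evalₐ_liftRingHom J _ (factorPow_comp_quotientMap_comp_evalₐ h) n x).trans <| by
    rw [RingHom.comp_apply, RingHom.coe_coe, hx, Ideal.quotientMap_mk]

theorem adicCompletionMap_algebraMap {f : A →+* B} {I : Ideal A} {J : Ideal B} (h : I.map f ≤ J)
    (a : A) : adicCompletionMap f h (algebraMap A _ a) = algebraMap B _ (f a) :=
  AdicCompletion.ext_evalₐ fun n => by
    rw [evalₐ_adicCompletionMap h (AlgHom.commutes _ a), AlgHom.commutes]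
    rfl

theorem mem_pow_map_algebraMap_iff {I : Ideal A} (hI : I.FG) {n : ℕ} {x : AdicCompletion I A} :
    x ∈ I.map (algebraMap A (AdicCompletion I A)) ^ n ↔ AdicCompletion.evalₐ I n x = 0 := by
  have hker := AdicCompletion.pow_smul_top_eq_ker_eval (M := A) (n := n) hI
  rw [Ideal.smul_top_eq_map, Ideal.map_pow] at hker
  rw [← Submodule.restrictScalars_mem A, hker, LinearMap.mem_ker]
  constructor <;> intro h
  · rw [← AdicCompletion.factor_eval_eq_evalₐ I x (Ideal.mul_top _).le, h, map_zero]
  · rw [← AdicCompletion.factor_evalₐ_eq_eval I x (Ideal.mul_top _).ge, h]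
    exact map_zero _

theorem exists_sub_algebraMap_mem_pow {I : Ideal A} (hI : I.FG) (n : ℕ) (x : AdicCompletion I A) :
    ∃ a : A, AdicCompletion.evalₐ I n x = Ideal.Quotient.mk _ a ∧
      x - algebraMap A _ a ∈ I.map (algebraMap A (AdicCompletion I A)) ^ n := by
  obtain ⟨a, ha⟩ := Ideal.Quotient.mk_surjective (AdicCompletion.evalₐ I n x)
  refine ⟨a, ha.symm, ?_⟩
  rw [mem_pow_map_algebraMap_iff hI, map_sub, AlgHom.commutes, ← ha]
  exact sub_self _

theorem adicCompletionMap_surjective {f : A →+* B} (hf : Function.Surjective f) {I : Ideal A}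
    (hI : I.FG) {J : Ideal B} (hJ : I.map f = J) :
    Function.Surjective (adicCompletionMap f hJ.le) := by
  subst hJ
  set F := adicCompletionMap f (le_refl (I.map f))
  set Ihat := I.map (algebraMap A (AdicCompletion I A))
  have hFG : (I.map f).FG := hI.map f
  have hmap : Ihat.map F = (I.map f).map (algebraMap B (AdicCompletion (I.map f) B)) := by
    rw [Ideal.map_map, Ideal.map_map]
    exact congrArg (Ideal.map · I) (RingHom.ext (adicCompletionMap_algebraMap le_rfl))
  have := AdicCompletion.isAdicComplete_self I hI
  have := AdicCompletion.isAdicComplete_self (I.map f) hFG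
  have : IsHausdorff (Ihat.map F) (AdicCompletion (I.map f) B) := hmap ▸ inferInstance
  refine surjective_of_mk_map_comp_surjective (I := Ihat) F fun y => ?_
  obtain ⟨y, rfl⟩ := Ideal.Quotient.mk_surjective y
  obtain ⟨b, -, hb⟩ := exists_sub_algebraMap_mem_pow hFG 1 y
  obtain ⟨a, rfl⟩ := hf b
  refine ⟨algebraMap A _ a, (Ideal.Quotient.eq.mpr ?_).symm⟩
  rw [pow_one] at hb
  rwa [adicCompletionMap_algebraMap, hmap]

theorem mem_of_forall_mem_sup_pow [IsNoetherianRing A] {I J : Ideal A}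
    (hI : I ≤ Ideal.jacobson ⊥) {x : A} (hx : ∀ n, x ∈ J ⊔ I ^ n) : x ∈ J := by
  have := IsHausdorff.of_le_jacobson I (A ⧸ J) hI
  refine Ideal.Quotient.eq_zero_iff_mem.mp (IsHausdorff.haus (I := I) this _ fun n => ?_)
  rw [SModEq.zero, Ideal.smul_top_eq_map, Submodule.restrictScalars_mem]
  obtain ⟨y, hy, z, hz, rfl⟩ := Submodule.mem_sup.mp (hx n)
  rw [map_add, Ideal.Quotient.eq_zero_iff_mem.mpr hy, zero_add]
  exact Ideal.mem_map_of_mem _ hz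

theorem ker_adicCompletionMap {f : A →+* B} (hf : Function.Surjective f) {I : Ideal A} (hI : I.FG)
    [IsNoetherianRing (AdicCompletion I A)] {J : Ideal B} (hJ : I.map f = J) :
    RingHom.ker (adicCompletionMap f hJ.le) = (RingHom.ker f).map (algebraMap A _) := by
  have := AdicCompletion.isAdicComplete_self I hI
  refine le_antisymm (fun x hx => mem_of_forall_mem_sup_pow
    (IsAdicComplete.le_jacobson_bot (I.map (algebraMap A (AdicCompletion I A)))) fun n => ?_)
    (Ideal.map_le_iff_le_comap.mpr fun a ha => ?_)
  · obtain ⟨a, hxa, hsub⟩ := exists_sub_algebraMap_mem_pow hI n x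
    have hfa : f a ∈ (I ^ n).map f := by
      rw [Ideal.map_pow, hJ, ← Ideal.Quotient.eq_zero_iff_mem, ← evalₐ_adicCompletionMap hJ.le hxa,
        RingHom.mem_ker.mp hx, map_zero]
    obtain ⟨c, hc, hca⟩ := (Ideal.mem_map_iff_of_surjective f hf).mp hfa
    have hac : a - c ∈ RingHom.ker f := by rw [RingHom.mem_ker, map_sub, hca, sub_self]
    have hc' : algebraMap A _ c ∈ I.map (algebraMap A (AdicCompletion I A)) ^ n := by
      rw [← Ideal.map_pow]
      exact Ideal.mem_map_of_mem _ hc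
    have hx_eq : x = algebraMap A _ (a - c) + (x - algebraMap A _ a + algebraMap A _ c) := by
      rw [map_sub]
      ring
    rw [hx_eq]
    exact Submodule.add_mem_sup (Ideal.mem_map_of_mem _ hac) (add_mem hsub hc')
  · rw [Ideal.mem_comap, RingHom.mem_ker, adicCompletionMap_algebraMap, RingHom.mem_ker.mp ha,
      map_zero]

end Completion

section LocalRing

theorem isAdicComplete_quotient {A : Type*} [CommRing A] [IsNoetherianRing A] (I J : Ideal A)
    [IsAdicComplete I A] : IsAdicComplete I (A ⧸ J) where
  toIsHausdorff := .of_le_jacobson I _ (IsAdicComplete.le_jacobson_bot I)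
  toIsPrecomplete := by
    rw [← AdicCompletion.of_surjective_iff]
    intro y
    obtain ⟨x, rfl⟩ := AdicCompletion.map_surjective I J.mkQ_surjective y
    obtain ⟨a, rfl⟩ := AdicCompletion.of_surjective I A x
    exact ⟨J.mkQ a, by rw [AdicCompletion.map_of]⟩

theorem IsRegularLocal.of_ringEquiv {A B : Type u} [CommRing A] [CommRing B] (e : A ≃+* B)
    (h : IsRegularLocal A) : IsRegularLocal B := by
  obtain ⟨_, _, hmax⟩ := h
  have := e.isLocalRing
  refine ⟨isNoetherianRing_of_ringEquiv A e, inferInstance, ?_⟩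
  rw [← map_maximalIdeal_of_surjective (e : A →+* B) e.surjective]
  exact hmax.map_ringEquiv e

theorem isLocalRing_quotient {A : Type*} [CommRing A] [IsLocalRing A] {I : Ideal A} (hI : I ≠ ⊤) :
    IsLocalRing (A ⧸ I) :=
  have := Ideal.Quotient.nontrivial_iff.mpr hI
  .of_surjective' (Ideal.Quotient.mk I) Ideal.Quotient.mk_surjective

theorem IsWeaklyRegularHom.baseChange {A B C : Type u} [CommRing A] [CommRing B] [CommRing C]
    [IsLocalRing A] [IsLocalRing B] [IsLocalRing C] {φ : A →+* C} (hφ : Function.Surjective φ)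
    {f : A →+* B} (hf : IsWeaklyRegularHom A B f) :
    IsWeaklyRegularHom C (B ⧸ (RingHom.ker φ).map f) (baseChangeOfSurjective hφ f) := by
  obtain ⟨_, hflat, hreg⟩ := hf
  have := Ideal.Quotient.nontrivial_iff.mpr (map_ne_top_of_isLocalHom f (RingHom.ker_ne_top φ))
  refine ⟨isLocalHom_baseChangeOfSurjective hφ f, baseChangeOfSurjective_flat hφ hflat, ?_⟩
  have hmax : (maximalIdeal C).map (baseChangeOfSurjective hφ f) =
      ((maximalIdeal A).map f).map (Ideal.Quotient.mk _) := by
    rw [← map_maximalIdeal_of_surjective φ hφ, Ideal.map_map, baseChangeOfSurjective_comp,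
      Ideal.map_map]
  rw [hmax]
  exact hreg.of_ringEquiv (DoubleQuot.quotQuotEquivQuotOfLE
    (Ideal.map_mono (le_maximalIdeal (RingHom.ker_ne_top φ)))).symm

end LocalRing

section CompleteIntersection

variable {A B C T : Type u} [CommRing A] [CommRing B] [CommRing C] [CommRing T] [IsLocalRing A]

theorem IsQuasiDeformation.baseChange [Nontrivial C] {φ : A →+* C} (hφ : Function.Surjective φ)
    (hker : GeneratedByRegularSequence A (RingHom.ker φ)) {f : A →+* B} {g : T →+* B}
    (h : IsQuasiDeformation A B T f g) :
    IsQuasiDeformation C (B ⧸ (RingHom.ker φ).map f) T (baseChangeOfSurjective hφ f)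
      ((Ideal.Quotient.mk _).comp g) := by
  obtain ⟨_, _, _, _, _, _, hf, hg, hg_ker⟩ := h
  have hne_top := map_ne_top_of_isLocalHom f (RingHom.ker_ne_top φ)
  have := isLocalRing_quotient hne_top
  have hsurj := (Ideal.Quotient.mk_surjective (I := (RingHom.ker φ).map f)).comp hg
  refine ⟨inferInstance, inferInstance, inferInstance, inferInstance,
    isLocalHom_baseChangeOfSurjective hφ f, .of_surjective _ hsurj,
    baseChangeOfSurjective_flat hφ hf, hsurj, ?_⟩
  rw [← RingHom.comap_ker, Ideal.mk_ker]
  exact .comap_of_surjective hg hg_ker (hker.map_of_flat hf hne_top)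

theorem IsCohenFactorizationAt.ker_adicCompletionMap_comp {ψ : A →+* B} {J : Ideal B}
    {f : A →+* T} {g : T →+* AdicCompletion J B} (h : IsCohenFactorizationAt A B ψ J T f g)
    (hJ : J.FG) (I : Ideal A) {J' : Ideal (B ⧸ I.map ψ)}
    (hJ' : J.map (Ideal.Quotient.mk (I.map ψ)) = J') :
    RingHom.ker ((adicCompletionMap (Ideal.Quotient.mk (I.map ψ)) hJ'.le).comp g) =
      I.map f ⊔ RingHom.ker g := by
  obtain ⟨hcomp, _, -, -, hg, -⟩ := h
  have := isNoetherianRing_of_surjective T _ g hg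
  rw [← RingHom.comap_ker, ker_adicCompletionMap Ideal.Quotient.mk_surjective hJ hJ', Ideal.mk_ker,
    Ideal.map_map, ← hcomp, ← Ideal.map_map, Ideal.comap_map_of_surjective' g hg]

variable [IsLocalRing B] [IsLocalRing C] [IsNoetherianRing B]

theorem IsCohenFactorizationAt.baseChange {φ : A →+* C} (hφ : Function.Surjective φ) {ψ : A →+* B}
    {f : A →+* T} {g : T →+* AdicCompletion (maximalIdeal B) B}
    (h : IsCohenFactorizationAt A B ψ (maximalIdeal B) T f g)
    [IsLocalRing (B ⧸ (RingHom.ker φ).map ψ)]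
    (hmax : (maximalIdeal B).map (Ideal.Quotient.mk ((RingHom.ker φ).map ψ)) = maximalIdeal _)
    {g' : T ⧸ (RingHom.ker φ).map f →+*
      AdicCompletion (maximalIdeal _) (B ⧸ (RingHom.ker φ).map ψ)}
    (hg' : g'.comp (Ideal.Quotient.mk _) = (adicCompletionMap _ hmax.le).comp g) :
    IsCohenFactorizationAt C (B ⧸ (RingHom.ker φ).map ψ) (baseChangeOfSurjective hφ ψ)
      (maximalIdeal _) (T ⧸ (RingHom.ker φ).map f) (baseChangeOfSurjective hφ f) g' := by
  obtain ⟨hcomp, _, ⟨_, _⟩, hf, hg, -⟩ := h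
  have := hf.1
  have := isLocalRing_quotient (map_ne_top_of_isLocalHom f (RingHom.ker_ne_top φ))
  have hg'_surj : Function.Surjective g' := by
    refine .of_comp (g := Ideal.Quotient.mk _) ?_
    rw [← RingHom.coe_comp, hg']
    exact (adicCompletionMap_surjective Ideal.Quotient.mk_surjective
      (maximalIdeal B).fg_of_isNoetherianRing hmax).comp hg
  refine ⟨(RingHom.cancel_right hφ).mp ?_, inferInstance, ⟨inferInstance, ?_⟩,
    hf.baseChange hφ, hg'_surj, .of_surjective _ hg'_surj⟩
  · rw [RingHom.comp_assoc, RingHom.comp_assoc, baseChangeOfSurjective_comp,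
      baseChangeOfSurjective_comp, ← RingHom.comp_assoc, hg', RingHom.comp_assoc, hcomp]
    exact RingHom.ext fun a => adicCompletionMap_algebraMap hmax.le (ψ a)
  · rw [← map_maximalIdeal_of_surjective _ Ideal.Quotient.mk_surjective]
    exact (IsAdicComplete.map_algebraMap_iff _ _).mpr (isAdicComplete_quotient _ _)

theorem IsCIAt.baseChange {φ : A →+* C} (hφ : Function.Surjective φ)
    (hker : GeneratedByRegularSequence A (RingHom.ker φ)) {ψ : A →+* B} (hψ : ψ.Flat)
    (h : IsCIAt A B ψ (maximalIdeal B)) [IsLocalRing (B ⧸ (RingHom.ker φ).map ψ)] :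
    IsCIAt C (B ⧸ (RingHom.ker φ).map ψ) (baseChangeOfSurjective hφ ψ) (maximalIdeal _) := by
  obtain ⟨T, _, f, g, hfac, hg_ker⟩ := h
  obtain ⟨hcomp, _, ⟨_, _⟩, -, hg, -⟩ := id hfac
  obtain ⟨-, xs, hxs, hxs_ker⟩ := generatedByRegularSequence_iff.mp hker
  have hmax := map_maximalIdeal_of_surjective (Ideal.Quotient.mk ((RingHom.ker φ).map ψ))
    Ideal.Quotient.mk_surjective
  set π := adicCompletionMap _ hmax.le
  have hπg : RingHom.ker (π.comp g) = (RingHom.ker φ).map f ⊔ RingHom.ker g :=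
    hfac.ker_adicCompletionMap_comp (maximalIdeal B).fg_of_isNoetherianRing _ hmax
  have hle : (RingHom.ker φ).map f ≤ RingHom.ker (π.comp g) := hπg ▸ le_sup_left
  have hxs_reg : RingTheory.Sequence.IsWeaklyRegular (AdicCompletion (maximalIdeal B) B)
      ((xs.map f).map g) := by
    have hflat : (algebraMap B (AdicCompletion (maximalIdeal B) B)).Flat :=
      RingHom.flat_algebraMap_iff.mpr inferInstance
    have := isWeaklyRegular_map_of_flat (hψ.comp hflat) hxs
    rwa [List.map_map, ← RingHom.coe_comp, hcomp]
  refine ⟨_, inferInstance, baseChangeOfSurjective hφ f,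
    Ideal.Quotient.lift _ (π.comp g) fun _ ha => hle ha,
    hfac.baseChange hφ hmax (Ideal.Quotient.lift_comp_mk _ _ _), ?_⟩
  rw [Ideal.ker_quotient_lift, hπg, Ideal.map_sup, Ideal.map_quotient_self, bot_sup_eq]
  exact hg_ker.map_mk_ker hg (by rw [← Ideal.map_ofList, hxs_ker]) hxs_reg
    (hπg ▸ RingHom.ker_ne_top _)

end CompleteIntersection

theorem ascent_cidimfd_of_surjective_ci_general {A C N : Type u} [CommRing A] [CommRing C]
    [IsLocalRing A] [IsLocalRing C] [Algebra A C] [AddCommGroup N] [Module A N] [Module C N]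
    [IsScalarTower A C N] (hsurj : Function.Surjective (algebraMap A C))
    (hker : GeneratedByRegularSequence A (RingHom.ker (algebraMap A C)))
    (h : HasFiniteCIQDDim A N) : HasFiniteCIQDDim C N := by
  obtain ⟨B, Q, _, _, _, f, g, hqd, hci, ⟨n, hfd⟩, -⟩ := h
  have hqd' := hqd.baseChange hsurj hker
  obtain ⟨_, _, _, _, _, _, -, hg', hg'_ker⟩ := id hqd'
  obtain ⟨_, _, _, _, _, _, hf, -⟩ := hqd
  exact ⟨B ⧸ (RingHom.ker (algebraMap A C)).map f, Q, inferInstance, inferInstance, inferInstance,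
    baseChangeOfSurjective hsurj f, (Ideal.Quotient.mk _).comp g, hqd',
    hci.baseChange hsurj hker hf, ⟨n, hfd.tensor_quotient_map_ker hsurj f g⟩,
    .of_ker_generatedByRegularSequence hg' hg'_ker⟩

/-- Ascent of complete intersection flat dimension. -/
theorem ascent_cidimfd_of_surjective_ci (hsur : Function.Surjective (algebraMap R S))
    (hker : GeneratedByRegularSequence R (RingHom.ker (algebraMap R S)))
    
    (hfd : HasFiniteCIQDDim R M) :
    HasFiniteCIQDDim S M :=
  ascent_cidimfd_of_surjective_ci_general hsur hker hfd
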